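/- Fix γ ∈ (1,2) and Φ_ℓ, Φ_r ∈ ℝ. There exist constants C > 0 and m > 0 (depending only on γ, Φ_ℓ and Φ_r) such that for every integer n ≥ 2 and all smooth compactly supported f, g : ℝ^{Λ_n} → ℝ, the sector condition ( ∫ f (−𝓛_n g) dμ_ss^n )² ≤ C n^m ( ∫ f (−𝓛_n f) dμ_ss^n ) ( ∫ g (−𝓛_n g) dμ_ss^n ) holds; in particular the constant in the sector condition is polynomial in n. -/

import Mathlib

open MeasureTheory Filter ENNReal NNReal

noncomputable section

/-- The normalizing constant `c_γ = (∑_{z∈ℤ, z≠0} |z|^{-(1+γ)})⁻¹`. -/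
def cGamma (γ : ℝ) : ℝ := (∑' z : ℤ, if z = 0 then (0:ℝ) else |(z : ℝ)| ^ (-(1 + γ)))⁻¹

/-- The long-range kernel `p(z) = c_γ |z|^{-(1+γ)}` for `z ≠ 0`, `p(0) = 0`. -/
def pker (γ : ℝ) (z : ℝ) : ℝ := if z = 0 then 0 else cGamma γ * |z| ^ (-(1 + γ))

/-- The discrete lattice `Λ_n = {1, …, n−1}`. -/
abbrev Lam (n : ℕ) : Finset ℕ := Finset.Icc 1 (n - 1)

/-- The configuration space `ℝ^{Λ_n}`. -/
abbrev Conf (n : ℕ) := (↥(Lam n) → ℝ)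

/-- The partial derivative `∂_{φ(k)} f` (with value `0` for `k ∉ Λ_n`). -/
def pdN (n : ℕ) (k : ℕ) (f : Conf n → ℝ) (φ : Conf n) : ℝ :=
  if h : k ∈ Lam n then deriv (fun a => f (Function.update φ ⟨k, h⟩ a)) (φ ⟨k, h⟩) else 0

/-- The coordinate `φ(k)` (with value `0` for `k ∉ Λ_n`). -/
def coordN (n : ℕ) (k : ℕ) (φ : Conf n) : ℝ := if h : k ∈ Lam n then φ ⟨k, h⟩ else 0

/-- The bulk part of the Ginzburg–Landau generator. -/
def GLbulk (γ : ℝ) (n : ℕ) (f : Conf n → ℝ) (φ : Conf n) : ℝ :=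
  (1/2) * ∑ x ∈ Lam n, ∑ y ∈ Lam n, pker γ ((y : ℝ) - (x : ℝ)) *
    ((coordN n x φ - coordN n y φ) * (pdN n y f φ - pdN n x f φ)
      + (pdN n y (pdN n y f) φ - pdN n y (pdN n x f) φ
          - pdN n x (pdN n y f) φ + pdN n x (pdN n x f) φ))

/-- The left boundary part of the Ginzburg–Landau generator. -/
def GLleft (Φl : ℝ) (n : ℕ) (f : Conf n → ℝ) (φ : Conf n) : ℝ :=
  pdN n 1 (pdN n 1 f) φ + (Φl - coordN n 1 φ) * pdN n 1 f φ

/-- The right boundary part of the Ginzburg–Landau generator. -/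
def GLright (Φr : ℝ) (n : ℕ) (f : Conf n → ℝ) (φ : Conf n) : ℝ :=
  pdN n (n - 1) (pdN n (n - 1) f) φ + (Φr - coordN n (n - 1) φ) * pdN n (n - 1) f φ

/-- The boundary-driven long-range Ginzburg–Landau generator
`𝓛_n = n^γ (𝓛^ℓ + 𝓛^r + 𝓛^{bulk})`. -/
def GLgen (γ Φl Φr : ℝ) (n : ℕ) (f : Conf n → ℝ) (φ : Conf n) : ℝ :=
  (n : ℝ) ^ γ * (GLleft Φl n f φ + GLright Φr n f φ + GLbulk γ n f φ)

/-- The Gaussian product measure on `ℝ^{Λ_n}` with unit variances and mean `m x` at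
coordinate `x`. -/
def gaussianProduct (n : ℕ) (m : ℕ → ℝ) : Measure (Conf n) :=
  Measure.pi fun x => ProbabilityTheory.gaussianReal (m (x : ℕ)) 1

/-- The discrete stationary equation for the profile `ψ` on `Λ_n = {1, …, n−1}`. -/
def IsDiscreteProfile (γ Φl Φr : ℝ) (n : ℕ) (ψ : ℕ → ℝ) : Prop :=
  ∀ x ∈ Lam n,
    (∑ y ∈ Lam n, pker γ ((y : ℝ) - (x : ℝ)) * (ψ y - ψ x))
      + (if x = 1 then Φl - ψ 1 else 0) + (if x = n - 1 then Φr - ψ (n - 1) else 0) = 0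

section Helpers

open ProbabilityTheory

/-- unnormalised density -/
def Wd (n : ℕ) (ψ : ℕ → ℝ) (φ : Conf n) : ℝ :=
  (∏ _i : ↥(Lam n), (Real.sqrt (2 * Real.pi))⁻¹) *
    Real.exp (∑ i : ↥(Lam n), -(φ i - ψ i) ^ 2 / 2)

lemma Wd_eq (n : ℕ) (ψ : ℕ → ℝ) (φ : Conf n) :
    Wd n ψ φ = ∏ i : ↥(Lam n), gaussianPDFReal (ψ i) 1 (φ i) := by
  unfold Wd gaussianPDFReal
  rw [Real.exp_sum, ← Finset.prod_mul_distrib]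
  simp

lemma Wd_nonneg (n : ℕ) (ψ : ℕ → ℝ) (φ : Conf n) : 0 ≤ Wd n ψ φ := by
  rw [Wd_eq]
  exact Finset.prod_nonneg fun i _ => gaussianPDFReal_nonneg _ _ _

lemma Wd_contDiff (n : ℕ) (ψ : ℕ → ℝ) : ContDiff ℝ (⊤ : ℕ∞) (Wd n ψ) := by
  unfold Wd
  fun_prop

lemma gaussianProduct_eq (n : ℕ) (ψ : ℕ → ℝ) :
    gaussianProduct n ψ = volume.withDensity (fun φ => ENNReal.ofReal (Wd n ψ φ)) := by
  unfold gaussianProduct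
  apply Measure.pi_eq
  intro s hs
  rw [withDensity_apply _ (MeasurableSet.univ_pi hs), volume_pi, Measure.restrict_pi_pi]
  have hint : ∀ i : ↥(Lam n), Integrable (gaussianPDFReal (ψ i) 1) (volume.restrict (s i)) :=
    fun i => (integrable_gaussianPDFReal _ _).restrict
  rw [← ofReal_integral_eq_lintegral_ofReal]
  · simp_rw [Wd_eq]
    rw [integral_fintype_prod_eq_prod, ENNReal.ofReal_prod_of_nonneg]
    · exact Finset.prod_congr rfl fun i _ =>
        (gaussianReal_apply_eq_integral _ one_ne_zero _).symm
    · intro i _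
      exact integral_nonneg fun x => gaussianPDFReal_nonneg _ _ _
  · rw [funext (Wd_eq n ψ)]
    exact Integrable.fintype_prod hint
  · exact ae_of_all _ fun φ => Wd_nonneg n ψ φ

instance (n : ℕ) (ψ : ℕ → ℝ) : IsProbabilityMeasure (gaussianProduct n ψ) := by
  unfold gaussianProduct; infer_instance

lemma integral_gP (n : ℕ) (ψ : ℕ → ℝ) (F : Conf n → ℝ) :
    ∫ φ, F φ ∂(gaussianProduct n ψ) = ∫ φ, F φ * Wd n ψ φ := by
  rw [gaussianProduct_eq, integral_withDensity_eq_integral_toReal_smul]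
  · congr 1; ext φ
    rw [ENNReal.toReal_ofReal (Wd_nonneg n ψ φ), smul_eq_mul, mul_comm]
  · exact (Wd_contDiff n ψ).continuous.measurable.ennreal_ofReal
  · exact ae_of_all _ fun _ => ENNReal.ofReal_lt_top

/-- basis vector -/
def eN (n k : ℕ) : Conf n := if h : k ∈ Lam n then Pi.single ⟨k, h⟩ 1 else 0

lemma pdN_eq {n : ℕ} (k : ℕ) {f : Conf n → ℝ} (hf : ContDiff ℝ (⊤ : ℕ∞) f) :
    pdN n k f = fun φ => fderiv ℝ f φ (eN n k) := by
  ext φ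
  unfold pdN eN
  split_ifs with h
  · have h1 : HasDerivAt (fun a => Function.update φ ⟨k, h⟩ a) (Pi.single ⟨k, h⟩ (1:ℝ))
        (φ ⟨k, h⟩) := hasDerivAt_update φ ⟨k, h⟩ _
    have h2 : HasFDerivAt f (fderiv ℝ f φ) (Function.update φ ⟨k, h⟩ (φ ⟨k, h⟩)) := by
      rw [Function.update_eq_self]
      exact (hf.differentiable (by simp) φ).hasFDerivAt
    exact (h2.comp_hasDerivAt _ h1).deriv
  · simp

lemma pdN_smooth {n : ℕ} (k : ℕ) {f : Conf n → ℝ} (hf : ContDiff ℝ (⊤ : ℕ∞) f) :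
    ContDiff ℝ (⊤ : ℕ∞) (pdN n k f) := by
  rw [pdN_eq k hf]
  exact (hf.fderiv_right (m := (⊤ : ℕ∞)) (by simp)).clm_apply contDiff_const

lemma pdN_supp {n : ℕ} (k : ℕ) {f : Conf n → ℝ} (hf : ContDiff ℝ (⊤ : ℕ∞) f)
    (hc : HasCompactSupport f) : HasCompactSupport (pdN n k f) := by
  rw [pdN_eq k hf]
  exact hc.fderiv_apply (𝕜 := ℝ) _

lemma coordN_smooth (n k : ℕ) : ContDiff ℝ (⊤ : ℕ∞) (coordN n k) := by
  unfold coordN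
  split_ifs <;> fun_prop

lemma Wd_fderiv (n k : ℕ) (hk : k ∈ Lam n) (ψ : ℕ → ℝ) (φ : Conf n) :
    fderiv ℝ (Wd n ψ) φ (eN n k) = -(coordN n k φ - ψ k) * Wd n ψ φ := by
  rw [← congrFun (pdN_eq k (Wd_contDiff n ψ)) φ]
  unfold pdN coordN
  rw [dif_pos hk, dif_pos hk]
  apply HasDerivAt.deriv
  unfold Wd
  have h1 : ∀ i ∈ (Finset.univ : Finset ↥(Lam n)),
      HasDerivAt (fun a => -(Function.update φ ⟨k, hk⟩ a i - ψ i) ^ 2 / 2)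
      (if i = ⟨k, hk⟩ then -(φ i - ψ i) else 0) (φ ⟨k, hk⟩) := by
    intro i _
    split_ifs with h
    · subst h
      simp only [Function.update_self]
      have := ((((hasDerivAt_id (φ ⟨k, hk⟩)).sub_const (ψ k)).pow 2).neg).div_const 2
      refine HasDerivAt.congr_deriv this ?_
      simp only [id]
      norm_num
      try ring
    · simp only [Function.update_of_ne h]
      exact hasDerivAt_const _ _
  have h2 := (((HasDerivAt.fun_sum h1).exp).const_mul
    (∏ _i : ↥(Lam n), (Real.sqrt (2 * Real.pi))⁻¹))
  refine HasDerivAt.congr_deriv h2 ?_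
  simp
  ring

lemma ibp (n k : ℕ) (hk : k ∈ Lam n) (ψ : ℕ → ℝ) {f h : Conf n → ℝ}
    (hf : ContDiff ℝ (⊤ : ℕ∞) f) (hfc : HasCompactSupport f) (hh : ContDiff ℝ (⊤ : ℕ∞) h) :
    ∫ φ, f φ * (-pdN n k h φ + (coordN n k φ - ψ k) * h φ) ∂(gaussianProduct n ψ)
      = ∫ φ, pdN n k f φ * h φ ∂(gaussianProduct n ψ) := by
  rw [integral_gP, integral_gP]
  have hW := Wd_contDiff n ψ
  have hG : ContDiff ℝ (⊤ : ℕ∞) (fun φ => h φ * Wd n ψ φ) := hh.mul hW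
  have key := integral_mul_fderiv_eq_neg_fderiv_mul_of_integrable (μ := (volume : Measure (Conf n)))
    (f := f) (g := fun φ => h φ * Wd n ψ φ) (v := eN n k) ?_ ?_ ?_
    (fun x _ => hf.differentiable (by simp) x) (fun x _ => hG.differentiable (by simp) x)
  · have e1 : ∀ φ, fderiv ℝ (fun φ => h φ * Wd n ψ φ) φ (eN n k)
        = -(-pdN n k h φ + (coordN n k φ - ψ k) * h φ) * Wd n ψ φ := by
      intro φ
      rw [fderiv_fun_mul (hh.differentiable (by simp) φ) (hW.differentiable (by simp) φ)]
      simp only [add_apply, smul_apply, smul_eq_mul]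
      rw [Wd_fderiv n k hk, pdN_eq k hh]
      ring
    simp_rw [e1] at key
    rw [← neg_inj, pdN_eq k hf]
    simp_rw [mul_assoc]
    rw [← key, ← integral_neg]
    congr 1; ext φ; ring
  · have := (pdN_smooth k hf).continuous
    have h2 := pdN_supp k hf hfc
    rw [pdN_eq k hf] at this h2
    exact (this.mul hG.continuous).integrable_of_hasCompactSupport h2.mul_right
  · have := (pdN_smooth k hG).continuous
    rw [pdN_eq k hG] at this
    exact (hf.continuous.mul this).integrable_of_hasCompactSupport hfc.mul_right
  · exact (hf.continuous.mul hG.continuous).integrable_of_hasCompactSupport hfc.mul_right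

lemma pker_symm (γ z : ℝ) : pker γ (-z) = pker γ z := by
  simp [pker]

lemma pker_nonneg (γ z : ℝ) : 0 ≤ pker γ z := by
  unfold pker cGamma
  split_ifs
  · rfl
  · apply mul_nonneg _ (by positivity)
    apply inv_nonneg.2
    apply tsum_nonneg
    intro z
    split_ifs <;> positivity

/-- carre du champ -/
def qf (γ : ℝ) (n : ℕ) (f g : Conf n → ℝ) (φ : Conf n) : ℝ :=
  pdN n 1 f φ * pdN n 1 g φ + pdN n (n-1) f φ * pdN n (n-1) g φ +
  (1/2) * ∑ x ∈ Lam n, ∑ y ∈ Lam n, pker γ ((y : ℝ) - (x : ℝ)) *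
    ((pdN n y f φ - pdN n x f φ) * (pdN n y g φ - pdN n x g φ))

/-- adjoint derivative composed with derivative -/
def Aop (n : ℕ) (ψ : ℕ → ℝ) (x y : ℕ) (g : Conf n → ℝ) (φ : Conf n) : ℝ :=
  -pdN n x (pdN n y g) φ + (coordN n x φ - ψ x) * pdN n y g φ

lemma stat_sum (γ Φl Φr : ℝ) (n : ℕ) (hn : 2 ≤ n) (ψ : ℕ → ℝ)
    (hψ : IsDiscreteProfile γ Φl Φr n ψ) (d : ℕ → ℝ) :
    (1/2) * ∑ x ∈ Lam n, ∑ y ∈ Lam n, pker γ ((y : ℝ) - (x : ℝ)) * ((ψ x - ψ y) * (d y - d x))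
      = - (Φl - ψ 1) * d 1 - (Φr - ψ (n-1)) * d (n-1) := by
  have h1 : (1:ℕ) ∈ Lam n := by simp; omega
  have h2 : (n-1) ∈ Lam n := by simp; omega
  have hs : ∑ x ∈ Lam n, d x * ((∑ y ∈ Lam n, pker γ ((y : ℝ) - (x : ℝ)) * (ψ y - ψ x))
      + (if x = 1 then Φl - ψ 1 else 0) + (if x = n - 1 then Φr - ψ (n - 1) else 0)) = 0 :=
    Finset.sum_eq_zero fun x hx => by rw [hψ x hx, mul_zero]
  simp only [mul_add, Finset.sum_add_distrib, mul_ite, mul_zero, Finset.sum_ite_eq', h1, h2,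
    if_true, Finset.mul_sum] at hs
  have e : ∑ x ∈ Lam n, ∑ y ∈ Lam n, pker γ ((y : ℝ) - (x : ℝ)) * ((ψ x - ψ y) * (d y - d x))
      = (∑ x ∈ Lam n, ∑ y ∈ Lam n, d x * (pker γ ((y : ℝ) - (x : ℝ)) * (ψ y - ψ x)))
        + ∑ x ∈ Lam n, ∑ y ∈ Lam n, d y * (pker γ ((x : ℝ) - (y : ℝ)) * (ψ x - ψ y)) := by
    rw [← Finset.sum_add_distrib]
    refine Finset.sum_congr rfl fun x _ => ?_
    rw [← Finset.sum_add_distrib]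
    refine Finset.sum_congr rfl fun y _ => ?_
    rw [show (x:ℝ) - y = -((y:ℝ) - x) by ring, pker_symm]
    ring
  rw [Finset.sum_comm (f := fun (x y : ℕ) => d y * (pker γ ((x : ℝ) - (y : ℝ)) * (ψ x - ψ y)))] at e
  rw [e]
  linarith

lemma gen_eq (γ Φl Φr : ℝ) (n : ℕ) (hn : 2 ≤ n) (ψ : ℕ → ℝ)
    (hψ : IsDiscreteProfile γ Φl Φr n ψ) (g : Conf n → ℝ) (φ : Conf n) :
    -(GLgen γ Φl Φr n g φ) = (n:ℝ) ^ γ * (Aop n ψ 1 1 g φ + Aop n ψ (n-1) (n-1) g φ +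
      (1/2) * ∑ x ∈ Lam n, ∑ y ∈ Lam n, pker γ ((y : ℝ) - (x : ℝ)) *
        (Aop n ψ y y g φ - Aop n ψ y x g φ - Aop n ψ x y g φ + Aop n ψ x x g φ)) := by
  have hs := stat_sum γ Φl Φr n hn ψ hψ (fun x => pdN n x g φ)
  have e : ∑ x ∈ Lam n, ∑ y ∈ Lam n, pker γ ((y : ℝ) - (x : ℝ)) *
        (Aop n ψ y y g φ - Aop n ψ y x g φ - Aop n ψ x y g φ + Aop n ψ x x g φ)
      = (∑ x ∈ Lam n, ∑ y ∈ Lam n, pker γ ((y : ℝ) - (x : ℝ)) *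
          ((ψ x - ψ y) * (pdN n y g φ - pdN n x g φ)))
        - ∑ x ∈ Lam n, ∑ y ∈ Lam n, pker γ ((y : ℝ) - (x : ℝ)) *
    ((coordN n x φ - coordN n y φ) * (pdN n y g φ - pdN n x g φ)
      + (pdN n y (pdN n y g) φ - pdN n y (pdN n x g) φ
          - pdN n x (pdN n y g) φ + pdN n x (pdN n x g) φ)) := by
    rw [← Finset.sum_sub_distrib]
    refine Finset.sum_congr rfl fun x _ => ?_
    rw [← Finset.sum_sub_distrib]
    refine Finset.sum_congr rfl fun y _ => ?_
    unfold Aop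
    ring
  rw [e, mul_sub, hs]
  unfold GLgen GLleft GLright GLbulk Aop
  ring

lemma Aop_cont (n : ℕ) (ψ : ℕ → ℝ) (x y : ℕ) {g : Conf n → ℝ} (hg : ContDiff ℝ (⊤ : ℕ∞) g) :
    Continuous (Aop n ψ x y g) := by
  unfold Aop
  have h1 := (pdN_smooth y hg).continuous
  have h2 := (pdN_smooth x (pdN_smooth y hg)).continuous
  have h3 := (coordN_smooth n x).continuous
  fun_prop

lemma integrable_gP (n : ℕ) (ψ : ℕ → ℝ) {F : Conf n → ℝ} (hF : Continuous F)
    (hc : HasCompactSupport F) : Integrable F (gaussianProduct n ψ) :=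
  hF.integrable_of_hasCompactSupport hc

lemma form_eq (γ Φl Φr : ℝ) (n : ℕ) (hn : 2 ≤ n) (ψ : ℕ → ℝ)
    (hψ : IsDiscreteProfile γ Φl Φr n ψ) {f g : Conf n → ℝ}
    (hf : ContDiff ℝ (⊤ : ℕ∞) f) (hfc : HasCompactSupport f) (hg : ContDiff ℝ (⊤ : ℕ∞) g) :
    ∫ φ, f φ * (-(GLgen γ Φl Φr n g φ)) ∂(gaussianProduct n ψ)
      = (n:ℝ) ^ γ * ∫ φ, qf γ n f g φ ∂(gaussianProduct n ψ) := by
  have h1 : (1:ℕ) ∈ Lam n := by simp; omega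
  have h2 : (n-1) ∈ Lam n := by simp; omega
  have iA : ∀ x y, Integrable (fun φ => f φ * Aop n ψ x y g φ) (gaussianProduct n ψ) :=
    fun x y => integrable_gP n ψ (hf.continuous.mul (Aop_cont n ψ x y hg)) hfc.mul_right
  have iB : ∀ x y, Integrable (fun φ => pdN n x f φ * pdN n y g φ) (gaussianProduct n ψ) :=
    fun x y => integrable_gP n ψ ((pdN_smooth x hf).continuous.mul (pdN_smooth y hg).continuous)
      (pdN_supp x hf hfc).mul_right
  have hAB : ∀ x ∈ Lam n, ∀ y, ∫ φ, f φ * Aop n ψ x y g φ ∂(gaussianProduct n ψ)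
      = ∫ φ, pdN n x f φ * pdN n y g φ ∂(gaussianProduct n ψ) :=
    fun x hx y => ibp n x hx ψ hf hfc (pdN_smooth y hg)
  -- a generic linear expansion
  have gen : ∀ T : ℕ → ℕ → Conf n → ℝ,
      (∀ x y, Integrable (T x y) (gaussianProduct n ψ)) →
      ∫ φ, (T 1 1 φ + T (n-1) (n-1) φ + (1/2) * ∑ x ∈ Lam n, ∑ y ∈ Lam n,
        pker γ ((y : ℝ) - (x : ℝ)) * (T y y φ - T y x φ - T x y φ + T x x φ))
          ∂(gaussianProduct n ψ)
      = (∫ φ, T 1 1 φ ∂(gaussianProduct n ψ)) + (∫ φ, T (n-1) (n-1) φ ∂(gaussianProduct n ψ))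
        + (1/2) * ∑ x ∈ Lam n, ∑ y ∈ Lam n, pker γ ((y : ℝ) - (x : ℝ)) *
          ((∫ φ, T y y φ ∂(gaussianProduct n ψ)) - (∫ φ, T y x φ ∂(gaussianProduct n ψ))
            - (∫ φ, T x y φ ∂(gaussianProduct n ψ)) + ∫ φ, T x x φ ∂(gaussianProduct n ψ)) := by
    intro T hT
    have hI : ∀ x y, Integrable (fun φ => T y y φ - T y x φ - T x y φ + T x x φ)
        (gaussianProduct n ψ) := fun x y => (((hT y y).sub (hT y x)).sub (hT x y)).add (hT x x)
    have hS : ∀ x : ℕ, Integrable (fun φ => ∑ y ∈ Lam n,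
        pker γ ((y : ℝ) - (x : ℝ)) * (T y y φ - T y x φ - T x y φ + T x x φ))
        (gaussianProduct n ψ) := fun x => integrable_finsetSum _ fun y _ => (hI x y).const_mul _
    have hT2 : Integrable (fun φ => T 1 1 φ + T (n-1) (n-1) φ) (gaussianProduct n ψ) :=
      (hT 1 1).add (hT (n-1) (n-1))
    have hd1 : ∀ x y, Integrable (fun φ => T y y φ - T y x φ) (gaussianProduct n ψ) :=
      fun x y => (hT y y).sub (hT y x)
    have hd2 : ∀ x y, Integrable (fun φ => T y y φ - T y x φ - T x y φ) (gaussianProduct n ψ) :=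
      fun x y => (hd1 x y).sub (hT x y)
    rw [integral_add hT2
      ((integrable_finsetSum _ fun x _ => hS x).const_mul _), integral_add (hT 1 1) (hT _ _),
      integral_const_mul, integral_finsetSum _ fun x _ => hS x]
    congr 2
    refine Finset.sum_congr rfl fun x _ => ?_
    rw [integral_finsetSum _ fun y _ => (hI x y).const_mul _]
    refine Finset.sum_congr rfl fun y _ => ?_
    rw [integral_const_mul, integral_add (hd2 x y) (hT x x),
      integral_sub (hd1 x y) (hT x y), integral_sub (hT y y) (hT y x)]
  have eL : ∀ φ, f φ * (-(GLgen γ Φl Φr n g φ)) = (n:ℝ)^γ *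
      ((f φ * Aop n ψ 1 1 g φ) + (f φ * Aop n ψ (n-1) (n-1) g φ) + (1/2) *
        ∑ x ∈ Lam n, ∑ y ∈ Lam n, pker γ ((y : ℝ) - (x : ℝ)) *
        (f φ * Aop n ψ y y g φ - f φ * Aop n ψ y x g φ - f φ * Aop n ψ x y g φ
          + f φ * Aop n ψ x x g φ)) := by
    intro φ
    have : ∑ x ∈ Lam n, ∑ y ∈ Lam n, pker γ ((y : ℝ) - (x : ℝ)) *
        (f φ * Aop n ψ y y g φ - f φ * Aop n ψ y x g φ - f φ * Aop n ψ x y g φ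
          + f φ * Aop n ψ x x g φ) = f φ * ∑ x ∈ Lam n, ∑ y ∈ Lam n,
          pker γ ((y : ℝ) - (x : ℝ)) *
        (Aop n ψ y y g φ - Aop n ψ y x g φ - Aop n ψ x y g φ + Aop n ψ x x g φ) := by
      simp_rw [Finset.mul_sum]
      refine Finset.sum_congr rfl fun x _ => Finset.sum_congr rfl fun y _ => ?_
      ring
    rw [this, gen_eq γ Φl Φr n hn ψ hψ]
    ring
  have eR : ∀ φ, qf γ n f g φ = 
      (pdN n 1 f φ * pdN n 1 g φ) + (pdN n (n-1) f φ * pdN n (n-1) g φ) + (1/2) *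
        ∑ x ∈ Lam n, ∑ y ∈ Lam n, pker γ ((y : ℝ) - (x : ℝ)) *
        (pdN n y f φ * pdN n y g φ - pdN n y f φ * pdN n x g φ - pdN n x f φ * pdN n y g φ
          + pdN n x f φ * pdN n x g φ) := by
    intro φ
    unfold qf
    congr 2
    refine Finset.sum_congr rfl fun x _ => Finset.sum_congr rfl fun y _ => ?_
    ring
  simp_rw [eL, eR]
  rw [integral_const_mul, gen (fun x y φ => f φ * Aop n ψ x y g φ) iA,
    gen (fun x y φ => pdN n x f φ * pdN n y g φ) iB, hAB 1 h1, hAB _ h2]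
  congr 3
  refine Finset.sum_congr rfl fun x hx => Finset.sum_congr rfl fun y hy => ?_
  rw [hAB x hx, hAB x hx, hAB y hy, hAB y hy]

lemma qf_integrable (γ : ℝ) (n : ℕ) (ψ : ℕ → ℝ) {f g : Conf n → ℝ}
    (hf : ContDiff ℝ (⊤ : ℕ∞) f) (hfc : HasCompactSupport f)
    (hg : ContDiff ℝ (⊤ : ℕ∞) g) :
    Integrable (qf γ n f g) (gaussianProduct n ψ) := by
  have iB : ∀ x y, Integrable (fun φ => pdN n x f φ * pdN n y g φ) (gaussianProduct n ψ) :=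
    fun x y => integrable_gP n ψ ((pdN_smooth x hf).continuous.mul (pdN_smooth y hg).continuous)
      (pdN_supp x hf hfc).mul_right
  unfold qf
  refine ((iB _ _).add (iB _ _)).add (Integrable.const_mul ?_ _)
  refine integrable_finsetSum _ fun x _ => integrable_finsetSum _ fun y _ =>
    Integrable.const_mul ?_ _
  have := (((iB y y).sub (iB y x)).sub (iB x y)).add (iB x x)
  refine this.congr (ae_of_all _ fun φ => ?_)
  simp only [Pi.add_apply, Pi.sub_apply]
  ring

lemma qf_quad (γ : ℝ) (n : ℕ) (f g : Conf n → ℝ) (t : ℝ) (φ : Conf n) :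
    0 ≤ qf γ n g g φ * (t * t) + 2 * qf γ n f g φ * t + qf γ n f f φ := by
  have : qf γ n g g φ * (t * t) + 2 * qf γ n f g φ * t + qf γ n f f φ =
      (pdN n 1 f φ + t * pdN n 1 g φ) ^ 2 + (pdN n (n-1) f φ + t * pdN n (n-1) g φ) ^ 2 +
      (1/2) * ∑ x ∈ Lam n, ∑ y ∈ Lam n, pker γ ((y : ℝ) - (x : ℝ)) *
      ((pdN n y f φ - pdN n x f φ) + t * (pdN n y g φ - pdN n x g φ)) ^ 2 := by
    have e : ∑ x ∈ Lam n, ∑ y ∈ Lam n, pker γ ((y : ℝ) - (x : ℝ)) *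
      ((pdN n y f φ - pdN n x f φ) + t * (pdN n y g φ - pdN n x g φ)) ^ 2 =
      (t * t) * (∑ x ∈ Lam n, ∑ y ∈ Lam n, pker γ ((y : ℝ) - (x : ℝ)) *
        ((pdN n y g φ - pdN n x g φ) * (pdN n y g φ - pdN n x g φ))) +
      2 * t * (∑ x ∈ Lam n, ∑ y ∈ Lam n, pker γ ((y : ℝ) - (x : ℝ)) *
        ((pdN n y f φ - pdN n x f φ) * (pdN n y g φ - pdN n x g φ))) +
      ∑ x ∈ Lam n, ∑ y ∈ Lam n, pker γ ((y : ℝ) - (x : ℝ)) *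
        ((pdN n y f φ - pdN n x f φ) * (pdN n y f φ - pdN n x f φ)) := by
      simp_rw [Finset.mul_sum, ← Finset.sum_add_distrib]
      refine Finset.sum_congr rfl fun x _ => Finset.sum_congr rfl fun y _ => ?_
      ring
    rw [e]
    unfold qf
    ring
  rw [this]
  have : 0 ≤ ∑ x ∈ Lam n, ∑ y ∈ Lam n, pker γ ((y : ℝ) - (x : ℝ)) *
      ((pdN n y f φ - pdN n x f φ) + t * (pdN n y g φ - pdN n x g φ)) ^ 2 :=
    Finset.sum_nonneg fun x _ => Finset.sum_nonneg fun y _ =>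
      mul_nonneg (pker_nonneg _ _) (sq_nonneg _)
  positivity

end Helpers

/-- Sector condition for the boundary-driven long-range Ginzburg–Landau
generator with respect to its non-equilibrium steady state, with a constant that is
polynomial in `n`. -/
theorem sector_condition
    (γ : ℝ) (hγ : γ ∈ Set.Ioo (1:ℝ) 2) (Φl Φr : ℝ) :
    ∃ C : ℝ, 0 < C ∧ ∃ m : ℝ, 0 < m ∧ ∀ n : ℕ, 2 ≤ n →
      ∀ ψ : ℕ → ℝ, IsDiscreteProfile γ Φl Φr n ψ →
      ∀ f g : Conf n → ℝ, ContDiff ℝ (⊤ : ℕ∞) f → HasCompactSupport f →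
        ContDiff ℝ (⊤ : ℕ∞) g → HasCompactSupport g →
        (∫ φ, f φ * (-(GLgen γ Φl Φr n g φ)) ∂(gaussianProduct n ψ)) ^ 2
          ≤ C * (n : ℝ) ^ m *
              (∫ φ, f φ * (-(GLgen γ Φl Φr n f φ)) ∂(gaussianProduct n ψ)) *
              (∫ φ, g φ * (-(GLgen γ Φl Φr n g φ)) ∂(gaussianProduct n ψ)) := by
  refine ⟨1, one_pos, 1, one_pos, ?_⟩
  intro n hn ψ hψ f g hf hfc hg hgc
  rw [form_eq γ Φl Φr n hn ψ hψ hf hfc hg, form_eq γ Φl Φr n hn ψ hψ hf hfc hf,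
    form_eq γ Φl Φr n hn ψ hψ hg hgc hg]
  have i1 := qf_integrable γ n ψ hf hfc hg
  have i2 := qf_integrable γ n ψ hf hfc hf
  have i3 := qf_integrable γ n ψ hg hgc hg
  have hd := discrim_le_zero (a := ∫ φ, qf γ n g g φ ∂(gaussianProduct n ψ))
    (b := 2 * ∫ φ, qf γ n f g φ ∂(gaussianProduct n ψ))
    (c := ∫ φ, qf γ n f f φ ∂(gaussianProduct n ψ)) (by
      intro t
      have h0 : 0 ≤ ∫ φ, (qf γ n g g φ * (t * t) + 2 * qf γ n f g φ * t + qf γ n f f φ)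
          ∂(gaussianProduct n ψ) := integral_nonneg (fun φ => qf_quad γ n f g t φ)
      have i4 : Integrable (fun φ => qf γ n g g φ * (t * t) + 2 * qf γ n f g φ * t)
          (gaussianProduct n ψ) := (i3.mul_const _).add ((i1.const_mul 2).mul_const t)
      rw [integral_add i4 i2,
        integral_add (i3.mul_const _) ((i1.const_mul 2).mul_const t),
        integral_mul_const, integral_mul_const, integral_const_mul] at h0
      exact h0)
  have p1 : 0 ≤ ∫ φ, qf γ n f f φ ∂(gaussianProduct n ψ) :=
    integral_nonneg fun φ => by simpa using qf_quad γ n f g 0 φ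
  have p2 : 0 ≤ ∫ φ, qf γ n g g φ ∂(gaussianProduct n ψ) :=
    integral_nonneg fun φ => by simpa using qf_quad γ n g g 0 φ
  rw [discrim] at hd
  have hn1 : (1:ℝ) ≤ n := by exact_mod_cast (by omega : 1 ≤ n)
  have hN : (0:ℝ) ≤ (n:ℝ) ^ γ := by positivity
  rw [Real.rpow_one, one_mul]
  generalize (∫ φ, qf γ n f f φ ∂(gaussianProduct n ψ)) = a at *
  generalize (∫ φ, qf γ n g g φ ∂(gaussianProduct n ψ)) = b at *
  generalize (∫ φ, qf γ n f g φ ∂(gaussianProduct n ψ)) = c at *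
  generalize (n:ℝ) ^ γ = N at *
  have hc : c ^ 2 ≤ a * b := by nlinarith
  calc (N * c) ^ 2 = N ^ 2 * c ^ 2 := by ring
    _ ≤ N ^ 2 * (a * b) := by gcongr
    _ ≤ n * (N ^ 2 * (a * b)) := le_mul_of_one_le_left (by positivity) hn1
    _ = n * (N * a) * (N * b) := by ring
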